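/- arXiv:1504.06105 — 2 statements merged into one kernel-verified Lean document; each statement's English description precedes it below -/
import Mathlib

section
/- Let → be a type-invariant transition relation of dimension n. For every finite run r from (q, w̄) to (p, v̄) there is a finite run r' from (q, w̄') to (p, v̄') of the same type, i.e. with typ_C(w̄, v̄) = typ_C(w̄', v̄') as 2n-tuples, such that the set MCAT_C(w̄', v̄') has 2n-gaps above (the set of entries of) C. -/
/-!
Stretch words by repeating letters: every letter ending a prefix `u` of a word is replaced by
`f u + 1` copies of itself. Since the number of copies depends only on the prefix read so far, two
words that share a prefix are stretched alike along it and then branch at the first copy of the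
letters where they differ, so that stretching preserves longest common prefixes, the prefix order
and the lexicographic order. Taking `f u = 0` when `u` is a prefix of a constant and `f u = m`
otherwise, the constants are fixed, so stretching every word of a run preserves the types of all
tuples and yields again a run by type invariance. On the other hand, each word that is not a prefix
of a constant has had its last letter repeated `m + 1` times, which creates the gaps.
-/

namespace CLTL

/-- A word is a finite sequence of rationals. -/
abbrev Word := List ℚ

/-- Lexicographic order on lists over a linear order: `w ⊑ v` iff `w` is a prefix of `v`,
or they branch at some position with the letter of `w` smaller. -/
def lexLe {α : Type*} [LinearOrder α] (w v : List α) : Prop :=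
  w <+: v ∨ ∃ (p : List α) (a b : α), a < b ∧ (p ++ [a]) <+: w ∧ (p ++ [b]) <+: v

/-- Longest common prefix of two lists. -/
def lcp {α : Type*} [DecidableEq α] : List α → List α → List α
  | a :: w, b :: v => if a = b then a :: lcp w v else []
  | _, _ => []

/-- Iterated longest common prefix of a nonempty list of words. -/
def listLCP : List Word → Word
  | [] => []
  | [x] => x
  | x :: xs => lcp x (listLCP xs)

/-- Insertion of an `m`-gap at `u`. -/
def iota (u : Word) (m : ℕ) (w : Word) : Word :=
  if u <+: w then u ++ List.replicate m 0 ++ w.drop u.length else w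

/-- The maximal common ancestor tree of a tuple `w` together with constants `C`:
`{ε}` together with all iterated longest common prefixes of nonempty subsets of entries. -/
def MCAT (C : List Word) {k : ℕ} (w : Fin k → Word) : Set Word :=
  insert [] { x | ∃ I : Finset (Fin (k + C.length)),
    I.Nonempty ∧ x = listLCP (I.toList.map (Fin.append w C.get)) }

/-- `h` is the induced isomorphism witnessing `typ_C(w) = typ_C(v)`. -/
def IsInducedIso (C : List Word) {k : ℕ} (w v : Fin k → Word) (h : Word → Word) : Prop :=
  Set.BijOn h (MCAT C w) (MCAT C v) ∧
  (∀ x ∈ MCAT C w, ∀ y ∈ MCAT C w,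
    (x <+: y ↔ h x <+: h y) ∧ (lexLe x y ↔ lexLe (h x) (h y))) ∧
  (∀ c ∈ C, h c = c) ∧
  (∀ i : Fin k, h (w i) = v i)

/-- `typ_C(w) = typ_C(v)`. -/
def SameTyp (C : List Word) {k : ℕ} (w v : Fin k → Word) : Prop :=
  ∃ h : Word → Word, IsInducedIso C w v h

/-- The stretching condition on an isomorphism `h` of `MCAT_C(w)`:
`|h e| - |h d| ≥ |e| - |d|` whenever `d` is a proper prefix of `e`. -/
def StretchCond (C : List Word) {k : ℕ} (w : Fin k → Word) (h : Word → Word) : Prop :=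
  ∀ d ∈ MCAT C w, ∀ e ∈ MCAT C w, d <+: e → d ≠ e →
    e.length + (h d).length ≤ (h e).length + d.length

/-- `w ≼* v` for tuples of words. -/
def Stretch (C : List Word) {k : ℕ} (w v : Fin k → Word) : Prop :=
  ∃ h : Word → Word, IsInducedIso C w v h ∧ StretchCond C w h

/-- `≼*` on configurations. -/
def ConfigLe (C : List Word) {Q : Type*} {n : ℕ}
    (c d : Q × (Fin n → Word)) : Prop :=
  c.1 = d.1 ∧ Stretch C c.2 d.2

/-- A transition relation is type-invariant. -/
def TypeInvariant (C : List Word) {Q : Type*} {n : ℕ}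
    (step : (Q × (Fin n → Word)) → (Q × (Fin n → Word)) → Prop) : Prop :=
  ∀ (q p : Q) (w v w' v' : Fin n → Word),
    step (q, w) (p, v) → SameTyp C (Fin.append w v) (Fin.append w' v') →
      step (q, w') (p, v')

/-- Finite runs, indexed by `Fin (N+1)`. -/
def IsFinRun {Q : Type*} {n : ℕ}
    (step : (Q × (Fin n → Word)) → (Q × (Fin n → Word)) → Prop)
    {N : ℕ} (r : Fin (N + 1) → Q × (Fin n → Word)) : Prop :=
  ∀ i : Fin N, step (r i.castSucc) (r i.succ)

/-- Infinite runs. -/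
def IsInfRun {Q : Type*} {n : ℕ}
    (step : (Q × (Fin n → Word)) → (Q × (Fin n → Word)) → Prop)
    (r : ℕ → Q × (Fin n → Word)) : Prop :=
  ∀ i : ℕ, step (r i) (r (i + 1))

/-- The pair `(w, v)` (of tuples of equal type) is contracting. -/
def ContractingPair (C : List Word) {k : ℕ} (w v : Fin k → Word) : Prop :=
  ∃ h : Word → Word, IsInducedIso C w v h ∧
    ((∃ d ∈ MCAT C w, h d <+: d ∧ h d ≠ d) ∨
     (∃ d ∈ MCAT C w, ∃ e ∈ MCAT C w,
        d <+: e ∧ d ≠ e ∧ h e = e ∧ d <+: h d ∧ d ≠ h d))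

/-- A set of words `T` has `n`-gaps above `B`. -/
def HasGaps (n : ℕ) (T B : Set Word) : Prop :=
  ∀ d ∈ T, ∀ e ∈ T, d <+: e → d ≠ e → (∀ b ∈ B, ¬ e <+: b) → n + d.length < e.length

section Lists

variable {α : Type*}

theorem lcp_append_left [DecidableEq α] (u w v : List α) :
    lcp (u ++ w) (u ++ v) = u ++ lcp w v := by
  induction u with
  | nil => rfl
  | cons a u ih => simp [lcp, ih]

variable [LinearOrder α]

theorem lexLe_nil_left (v : List α) : lexLe [] v := Or.inl List.nil_prefix

theorem not_lexLe_cons_nil (a : α) (w : List α) : ¬ lexLe (a :: w) [] := by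
  simp [lexLe]

theorem lexLe_cons_cons {a b : α} {w v : List α} :
    lexLe (a :: w) (b :: v) ↔ a < b ∨ a = b ∧ lexLe w v := by
  constructor
  · rintro (h | ⟨_ | ⟨c, p⟩, x, y, hxy, hw, hv⟩)
    · rw [List.cons_prefix_cons] at h
      exact Or.inr ⟨h.1, Or.inl h.2⟩
    · simp only [List.nil_append, List.cons_prefix_cons] at hw hv
      exact Or.inl (hw.1 ▸ hv.1 ▸ hxy)
    · simp only [List.cons_append, List.cons_prefix_cons] at hw hv
      exact Or.inr ⟨hw.1.symm.trans hv.1, Or.inr ⟨p, x, y, hxy, hw.2, hv.2⟩⟩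
  · rintro (h | ⟨rfl, h | ⟨p, x, y, hxy, hw, hv⟩⟩)
    · exact Or.inr ⟨[], a, b, h, by simp, by simp⟩
    · exact Or.inl (by simpa using h)
    · exact Or.inr ⟨a :: p, x, y, hxy, by simpa using hw, by simpa using hv⟩

theorem lexLe_append_left_iff (u : List α) {w v : List α} :
    lexLe (u ++ w) (u ++ v) ↔ lexLe w v := by
  induction u with
  | nil => rfl
  | cons a u ih => simp [lexLe_cons_cons, ih]

end Lists

/-- The stretching of a word along `f`: the letter that ends the nonempty prefix `u` of the word is
replaced by `f u + 1` copies of itself. The recursion turns `f` into its residual after the first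
letter, which avoids carrying the prefix read so far. -/
def stretch {α : Type*} (f : List α → ℕ) : List α → List α
  | [] => []
  | a :: w => List.replicate (f [a] + 1) a ++ stretch (fun u => f (a :: u)) w

section Stretch

variable {α : Type*}

theorem stretch_append (f : List α → ℕ) (w v : List α) :
    stretch f (w ++ v) = stretch f w ++ stretch (fun u => f (w ++ u)) v := by
  induction w generalizing f with
  | nil => rfl
  | cons a w ih => simp [stretch, ih]

theorem stretch_eq_self {f : List α → ℕ} {w : List α} (h : ∀ u, u <+: w → f u = 0) :
    stretch f w = w := by
  induction w generalizing f with
  | nil => rfl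
  | cons a w ih =>
    have hhead : f [a] = 0 := h [a] (by simp)
    have htail : stretch (fun u => f (a :: u)) w = w :=
      ih fun u hu => h (a :: u) (List.cons_prefix_cons.2 ⟨rfl, hu⟩)
    simp [stretch, hhead, htail]

theorem length_stretch_add_lt (f : List α → ℕ) {d e : List α} (hde : d <+: e) (hne : d ≠ e) :
    (stretch f d).length + f e < (stretch f e).length := by
  obtain ⟨t, rfl⟩ := hde
  obtain ⟨s, a, rfl⟩ : ∃ s a, t = s ++ [a] :=
    (List.eq_nil_or_concat' t).resolve_left (by rintro rfl; simp at hne)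
  have hlast : (stretch f (d ++ (s ++ [a]))).length =
      (stretch f (d ++ s)).length + (f (d ++ (s ++ [a])) + 1) := by
    rw [← List.append_assoc, stretch_append]
    simp [stretch]
  have hinit : (stretch f d).length ≤ (stretch f (d ++ s)).length := by
    simp [stretch_append]
  omega

theorem stretch_prefix_stretch_iff (f : List α → ℕ) (w v : List α) :
    stretch f w <+: stretch f v ↔ w <+: v := by
  induction w generalizing v f with
  | nil => simp [stretch]
  | cons a w ih =>
    obtain _ | ⟨b, v⟩ := v
    · simp [stretch]
    · obtain rfl | hab := eq_or_ne a b
      · simp [stretch, ih]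
      · simp [stretch, List.replicate_succ, hab]

theorem stretch_lcp [DecidableEq α] (f : List α → ℕ) (w v : List α) :
    stretch f (lcp w v) = lcp (stretch f w) (stretch f v) := by
  induction w generalizing v f with
  | nil => simp [stretch, lcp]
  | cons a w ih =>
    obtain _ | ⟨b, v⟩ := v
    · simp [stretch, lcp, List.replicate_succ]
    · obtain rfl | hab := eq_or_ne a b
      · simp only [stretch, lcp, lcp_append_left, if_true, ih]
      · simp [stretch, lcp, List.replicate_succ, hab]

theorem lexLe_stretch_iff [LinearOrder α] (f : List α → ℕ) (w v : List α) :
    lexLe (stretch f w) (stretch f v) ↔ lexLe w v := by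
  induction w generalizing v f with
  | nil => simp [stretch, lexLe_nil_left]
  | cons a w ih =>
    obtain _ | ⟨b, v⟩ := v
    · simp [stretch, List.replicate_succ, not_lexLe_cons_nil]
    · obtain rfl | hab := eq_or_ne a b
      · simp only [stretch, lexLe_append_left_iff, ih, lexLe_cons_cons, lt_irrefl, true_and,
          false_or]
      · simp [stretch, List.replicate_succ, lexLe_cons_cons, hab]

end Stretch

/-- A tree embedding over `C`: a map of words that respects the root, longest common prefixes, the
prefix order and the lexicographic order, and fixes the constants. Such a map induces an
isomorphism from the maximal common ancestor tree of any tuple onto that of its image. -/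
structure IsTreeEmbedding (C : List Word) (g : Word → Word) : Prop where
  map_nil : g [] = []
  map_lcp : ∀ w v, g (lcp w v) = lcp (g w) (g v)
  prefix_iff : ∀ w v, g w <+: g v ↔ w <+: v
  lexLe_iff : ∀ w v, lexLe (g w) (g v) ↔ lexLe w v
  map_const : ∀ c ∈ C, g c = c

theorem comp_append {α β : Type*} (g : α → β) {m n : ℕ} (w : Fin m → α) (v : Fin n → α) :
    g ∘ Fin.append w v = Fin.append (g ∘ w) (g ∘ v) := by
  funext i
  refine Fin.addCases (fun i => ?_) (fun i => ?_) i <;> simp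

namespace IsTreeEmbedding

variable {C : List Word} {g : Word → Word}

theorem injective (hg : IsTreeEmbedding C g) : Function.Injective g := fun w v h =>
  antisymm_of (· <+: ·) ((hg.prefix_iff w v).1 (h ▸ List.prefix_rfl))
    ((hg.prefix_iff v w).1 (h ▸ List.prefix_rfl))

theorem map_listLCP (hg : IsTreeEmbedding C g) (l : List Word) :
    g (listLCP l) = listLCP (l.map g) := by
  fun_induction listLCP l with
  | case1 => exact hg.map_nil
  | case2 x => rfl
  | case3 x xs hxs ih =>
    obtain ⟨y, ys, rfl⟩ := List.exists_cons_of_ne_nil hxs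
    rw [hg.map_lcp, ih]
    rfl

theorem MCAT_comp (hg : IsTreeEmbedding C g) {k : ℕ} (w : Fin k → Word) :
    MCAT C (g ∘ w) = g '' MCAT C w := by
  have hconst : g ∘ C.get = C.get := funext fun i => hg.map_const _ (List.get_mem C i)
  have hlcp (I : Finset (Fin (k + C.length))) :
      listLCP (I.toList.map (Fin.append (g ∘ w) C.get)) =
        g (listLCP (I.toList.map (Fin.append w C.get))) := by
    rw [hg.map_listLCP, List.map_map, comp_append, hconst]
  simp only [MCAT, hlcp, Set.image_insert_eq, hg.map_nil]
  congr 1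
  ext x
  constructor
  · rintro ⟨I, hI, rfl⟩
    exact ⟨_, ⟨I, hI, rfl⟩, rfl⟩
  · rintro ⟨_, ⟨I, hI, rfl⟩, rfl⟩
    exact ⟨I, hI, rfl⟩

theorem sameTyp_comp (hg : IsTreeEmbedding C g) {k : ℕ} (w : Fin k → Word) :
    SameTyp C w (g ∘ w) := by
  refine ⟨g, ?_, fun x _ y _ => ⟨(hg.prefix_iff x y).symm, (hg.lexLe_iff x y).symm⟩,
    hg.map_const, fun _ => rfl⟩
  rw [hg.MCAT_comp]
  exact hg.injective.injOn.bijOn_image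

theorem isFinRun_comp (hg : IsTreeEmbedding C g) {Q : Type*} {n : ℕ}
    {step : (Q × (Fin n → Word)) → (Q × (Fin n → Word)) → Prop} (hstep : TypeInvariant C step)
    {N : ℕ} {r : Fin (N + 1) → Q × (Fin n → Word)} (hr : IsFinRun step r) :
    IsFinRun step fun i => ((r i).1, g ∘ (r i).2) := fun i =>
  hstep _ _ _ _ _ _ (hr i) (comp_append g _ _ ▸ hg.sameTyp_comp _)

end IsTreeEmbedding

/-- The multiplicity function for `stretch` that inserts gaps of size `m` above `C`: `m` extra
copies of a letter, unless the prefix ending at it is a prefix of a constant. -/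
def gapWeight (C : List Word) (m : ℕ) (u : Word) : ℕ :=
  if ∃ c ∈ C, u <+: c then 0 else m

section GapWeight

variable (C : List Word) (m : ℕ)

theorem isTreeEmbedding_stretch_gapWeight : IsTreeEmbedding C (stretch (gapWeight C m)) where
  map_nil := rfl
  map_lcp := stretch_lcp _
  prefix_iff := stretch_prefix_stretch_iff _
  lexLe_iff := lexLe_stretch_iff _
  map_const c hc := stretch_eq_self fun _ hu => if_pos ⟨c, hc, hu⟩

theorem hasGaps_image_stretch_gapWeight (T : Set Word) :
    HasGaps m (stretch (gapWeight C m) '' T) {c | c ∈ C} := by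
  rintro _ ⟨d, -, rfl⟩ _ ⟨e, -, rfl⟩ hde hne hC
  have hg := isTreeEmbedding_stretch_gapWeight C m
  have he : ¬ ∃ c ∈ C, e <+: c := fun ⟨c, hc, hec⟩ =>
    hC c hc <| by simpa only [hg.map_const c hc] using (hg.prefix_iff e c).2 hec
  have hlt := length_stretch_add_lt (gapWeight C m) ((hg.prefix_iff d e).1 hde)
    (ne_of_apply_ne _ hne)
  rw [gapWeight, if_neg he] at hlt
  omega

end GapWeight

theorem stmt11_general (C : List Word) {Q : Type*} {n : ℕ}
    (step : (Q × (Fin n → Word)) → (Q × (Fin n → Word)) → Prop)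
    (hstep : TypeInvariant C step) (m : ℕ)
    {N : ℕ} (r : Fin (N + 1) → Q × (Fin n → Word)) (hr : IsFinRun step r) :
    ∃ r' : Fin (N + 1) → Q × (Fin n → Word),
      IsFinRun step r' ∧ (∀ i, (r' i).1 = (r i).1) ∧
      ∀ i j, SameTyp C (Fin.append (r i).2 (r j).2) (Fin.append (r' i).2 (r' j).2) ∧
        HasGaps m (MCAT C (Fin.append (r' i).2 (r' j).2)) {c | c ∈ C} := by
  have hg := isTreeEmbedding_stretch_gapWeight C m
  refine ⟨_, hg.isFinRun_comp hstep hr, fun _ => rfl, fun i j => ?_⟩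
  rw [← comp_append]
  refine ⟨hg.sameTyp_comp _, ?_⟩
  rw [hg.MCAT_comp]
  exact hasGaps_image_stretch_gapWeight C m _

/-- Every finite run has a finite run of the same type (with the same start and end states)
whose maximal common ancestor tree of the endpoint data values has `2n`-gaps above `C`. -/
theorem stmt11 (C : List Word) (hC : ∀ c ∈ C, ∀ c' : Word, c' <+: c → c' ∈ C)
    {Q : Type*} {n : ℕ}
    (step : (Q × (Fin n → Word)) → (Q × (Fin n → Word)) → Prop)
    (hstep : TypeInvariant C step)
    {N : ℕ} (r : Fin (N + 1) → Q × (Fin n → Word)) (hr : IsFinRun step r) :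
    ∃ (N' : ℕ) (r' : Fin (N' + 1) → Q × (Fin n → Word)),
      IsFinRun step r' ∧
      (r' 0).1 = (r 0).1 ∧ (r' (Fin.last N')).1 = (r (Fin.last N)).1 ∧
      SameTyp C (Fin.append (r 0).2 (r (Fin.last N)).2)
        (Fin.append (r' 0).2 (r' (Fin.last N')).2) ∧
      HasGaps (2 * n) (MCAT C (Fin.append (r' 0).2 (r' (Fin.last N')).2)) {c | c ∈ C} := by
  obtain ⟨r', hrun, hstate, htyp⟩ := stmt11_general C step hstep (2 * n) r hr
  exact ⟨N, r', hrun, hstate _, hstate _, htyp _ _⟩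

end CLTL
end

section
/- Let w̄, w̄' be tuples of words of equal length with w̄ ≼* w̄'. Then the induced isomorphism h : MCAT_C(w̄) → MCAT_C(w̄') extends to an injective map f : List ℚ → List ℚ such that for all words x, y: x ≼ y ↔ f(x) ≼ f(y), x ⊑ y ↔ f(x) ⊑ f(y), and f(x ⊓ y) = f(x) ⊓ f(y). -/
/-!
A map `f` on words has all the required properties as soon as, for every word `x`, it sends the
successors `x ++ [q]` into the cones above `f x ++ [φ q]` for some strictly increasing `φ`: any two
words are comparable or branch at a unique point, and both situations are carried over by `f`.

Let `T = MCAT_C(w)`; it is finite and closed under `⊓`. For `x` in the prefix closure of `T` there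
is a least `e ∈ T` above `x`, and `x` is sent to the word obtained from `h e` by deleting the last
`|e| - |x|` letters. If `x ∉ T`, then `x` has only one successor in the prefix closure, with the
same `e`, and its image has one more letter. If `x ∈ T`, the stretching condition from `x` to the
least element of `T` above `x ++ [q]` leaves room for at least one letter, and preservation of `⊓`
and `⊑` shows that these letters increase with `q`. Finitely many letters being prescribed at each
`x`, they extend to a strictly increasing `φ`, which also serves to map the words outside the
prefix closure, letter by letter.
-/

namespace CLTL

section LongestCommonPrefix

variable {α : Type*}

theorem eq_of_concat_prefix {p x : List α} {a b : α} (ha : p ++ [a] <+: x) (hb : p ++ [b] <+: x) :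
    a = b := by
  have h := List.prefix_of_prefix_length_le ha hb (by simp)
  simpa using h.eq_of_length (by simp)

theorem not_concat_prefix_self (p : List α) (a : α) : ¬ p ++ [a] <+: p :=
  fun h => by simpa using h.length_le

theorem exists_concat_prefix {x y : List α} (h : x <+: y) (hlt : x.length < y.length) :
    ∃ q, x ++ [q] <+: y :=
  ⟨_, List.concat_get_prefix h hlt⟩

theorem eq_or_exists_concat_prefix {x y : List α} (h : x <+: y) : x = y ∨ ∃ q, x ++ [q] <+: y :=
  h.length_le.eq_or_lt.imp h.eq_of_length (exists_concat_prefix h)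

variable [DecidableEq α]

theorem prefix_lcp_iff {x y z : List α} : z <+: lcp x y ↔ z <+: x ∧ z <+: y := by
  fun_induction lcp x y generalizing z with
  | case1 x b y ih =>
    cases z with
    | nil => simp
    | cons c z =>
      simp only [List.cons_prefix_cons, ih]
      tauto
  | case2 a x b y hab =>
    cases z with
    | nil => simp
    | cons c z =>
      simp only [List.cons_prefix_cons, List.prefix_nil, reduceCtorEq, false_iff]
      rintro ⟨⟨rfl, -⟩, rfl, -⟩
      exact hab rfl
  | case3 x y hcons =>
    cases x with
    | nil => simp +contextual
    | cons a x =>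
      cases y with
      | nil => simp +contextual
      | cons b y => exact (hcons a x b y rfl rfl).elim

theorem lcp_prefix_left (x y : List α) : lcp x y <+: x :=
  (prefix_lcp_iff.1 List.prefix_rfl).1

theorem lcp_prefix_right (x y : List α) : lcp x y <+: y :=
  (prefix_lcp_iff.1 List.prefix_rfl).2

theorem eq_lcp_of_forall_prefix_iff {x y m : List α} (h : ∀ z, z <+: m ↔ z <+: x ∧ z <+: y) :
    m = lcp x y :=
  (prefix_lcp_iff.2 ((h m).1 List.prefix_rfl)).eq_of_length_le
    ((h _).2 (prefix_lcp_iff.1 List.prefix_rfl)).length_le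

theorem lcp_comm (x y : List α) : lcp x y = lcp y x :=
  eq_lcp_of_forall_prefix_iff fun _ => prefix_lcp_iff.trans and_comm

theorem lcp_eq_left_iff {x y : List α} : lcp x y = x ↔ x <+: y :=
  ⟨fun h => h ▸ lcp_prefix_right x y, fun h =>
    (lcp_prefix_left x y).eq_of_length_le (prefix_lcp_iff.2 ⟨List.prefix_rfl, h⟩).length_le⟩

theorem lcp_eq_of_concat_prefix {p x y : List α} {a b : α} (ha : p ++ [a] <+: x)
    (hb : p ++ [b] <+: y) (hab : a ≠ b) : lcp x y = p := by
  have hp : p <+: lcp x y := prefix_lcp_iff.2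
    ⟨(List.prefix_append p [a]).trans ha, (List.prefix_append p [b]).trans hb⟩
  rcases eq_or_exists_concat_prefix hp with h | ⟨q, hq⟩
  · exact h.symm
  · obtain ⟨hx, hy⟩ := prefix_lcp_iff.1 hq
    exact absurd ((eq_of_concat_prefix ha hx).trans (eq_of_concat_prefix hy hb)) hab

/-- A set of words is `⊓`-closed if it contains the longest common prefix of any two of its
elements; this is the property of `MCAT_C(w)` that the extension argument uses. -/
def LcpClosed (T : Set (List α)) : Prop :=
  ∀ x ∈ T, ∀ y ∈ T, lcp x y ∈ T

theorem LcpClosed.map_lcp_of_prefix_iff {β : Type*} [DecidableEq β] {h : List α → List β}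
    {T : Set (List α)} (hT : LcpClosed T) (hT' : LcpClosed (h '' T))
    (hpre : ∀ x ∈ T, ∀ y ∈ T, (x <+: y ↔ h x <+: h y)) {x y : List α} (hx : x ∈ T) (hy : y ∈ T) :
    h (lcp x y) = lcp (h x) (h y) := by
  obtain ⟨u, hu, hlcp⟩ := hT' _ ⟨x, hx, rfl⟩ _ ⟨y, hy, rfl⟩
  have hm : lcp x y ∈ T := hT x hx y hy
  have hle : h (lcp x y) <+: lcp (h x) (h y) := prefix_lcp_iff.2
    ⟨(hpre _ hm x hx).1 (lcp_prefix_left x y), (hpre _ hm y hy).1 (lcp_prefix_right x y)⟩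
  have hge : u <+: lcp x y := prefix_lcp_iff.2
    ⟨(hpre u hu x hx).2 (hlcp ▸ lcp_prefix_left _ _),
      (hpre u hu y hy).2 (hlcp ▸ lcp_prefix_right _ _)⟩
  exact hle.eq_of_length_le (hlcp ▸ ((hpre u hu _ hm).1 hge).length_le)

end LongestCommonPrefix

section Lexicographic

variable {α : Type*} [LinearOrder α]

theorem lexLe_cons_cons_iff {a b : α} {x y : List α} :
    lexLe (a :: x) (b :: y) ↔ a < b ∨ a = b ∧ lexLe x y := by
  constructor
  · rintro (h | ⟨p, c, d, hcd, hc, hd⟩)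
    · obtain ⟨rfl, hxy⟩ := List.cons_prefix_cons.1 h
      exact Or.inr ⟨rfl, Or.inl hxy⟩
    · cases p with
      | nil =>
        obtain ⟨rfl, -⟩ := List.cons_prefix_cons.1 hc
        obtain ⟨rfl, -⟩ := List.cons_prefix_cons.1 hd
        exact Or.inl hcd
      | cons e p =>
        obtain ⟨rfl, hx⟩ := List.cons_prefix_cons.1 hc
        obtain ⟨rfl, hy⟩ := List.cons_prefix_cons.1 hd
        exact Or.inr ⟨rfl, Or.inr ⟨p, c, d, hcd, hx, hy⟩⟩
  · rintro (hab | ⟨rfl, h | ⟨p, c, d, hcd, hc, hd⟩⟩)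
    · exact Or.inr ⟨[], a, b, hab, by simp, by simp⟩
    · exact Or.inl (List.cons_prefix_cons.2 ⟨rfl, h⟩)
    · exact Or.inr ⟨a :: p, c, d, hcd, List.cons_prefix_cons.2 ⟨rfl, hc⟩,
        List.cons_prefix_cons.2 ⟨rfl, hd⟩⟩

theorem lexLe_iff_le {x y : List α} : lexLe x y ↔ x ≤ y := by
  induction x generalizing y with
  | nil => exact iff_of_true (Or.inl List.nil_prefix) (not_lt.1 nofun)
  | cons a x ih =>
    cases y with
    | nil => simp [lexLe]
    | cons b y =>
      rw [lexLe_cons_cons_iff, ih, ← not_lt, ← not_lt, List.cons_lt_cons_iff]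
      rcases lt_trichotomy a b with hab | rfl | hab
      · simp [hab, hab.not_gt, hab.ne']
      · simp
      · simp [hab, hab.not_gt, hab.ne']

theorem le_of_lexLe_of_concat_prefix {p x y : List α} {a b : α} (h : lexLe x y)
    (ha : p ++ [a] <+: x) (hb : p ++ [b] <+: y) : a ≤ b := by
  by_contra! hba
  have hyx : lexLe y x := Or.inr ⟨p, b, a, hba, hb, ha⟩
  obtain rfl : x = y := le_antisymm (lexLe_iff_le.1 h) (lexLe_iff_le.1 hyx)
  exact hba.ne (eq_of_concat_prefix hb ha)

end Lexicographic

section LocallyStrictMono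

variable {α β : Type*} [LinearOrder α] [LinearOrder β]

/-- `f` sends the successors of each word `x` into cones above successors of `f x`, in a strictly
increasing way. Such maps are embeddings for prefixes, `⊓` and the lexicographic order. -/
def LocallyStrictMono (f : List α → List β) : Prop :=
  ∀ x, ∃ φ : α → β, StrictMono φ ∧ ∀ q, f x ++ [φ q] <+: f (x ++ [q])

/-- The version of `LocallyStrictMono` for maps of interest only on a set `S` of words; it is meant
for prefix-closed `S`, so that only the membership of the successors is required. -/
def LocallyStrictMonoOn (f : List α → List β) (S : Set (List α)) : Prop :=
  ∀ x, ∃ φ : α → β, StrictMonoOn φ {q | x ++ [q] ∈ S} ∧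
    ∀ q, x ++ [q] ∈ S → f x ++ [φ q] <+: f (x ++ [q])

namespace LocallyStrictMono

variable {f : List α → List β}

theorem map_prefix (hf : LocallyStrictMono f) {x y : List α} (hxy : x <+: y) : f x <+: f y := by
  obtain ⟨t, rfl⟩ := hxy
  induction t using List.reverseRecOn with
  | nil => simp
  | append_singleton t q ih =>
    obtain ⟨φ, -, hφ⟩ := hf (x ++ t)
    rw [← List.append_assoc]
    exact (ih.trans (List.prefix_append _ _)).trans (hφ q)

theorem map_branch (hf : LocallyStrictMono f) {p x y : List α} {a b : α} (hab : a < b)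
    (ha : p ++ [a] <+: x) (hb : p ++ [b] <+: y) :
    ∃ c d, c < d ∧ f p ++ [c] <+: f x ∧ f p ++ [d] <+: f y := by
  obtain ⟨φ, hφ, hfφ⟩ := hf p
  exact ⟨φ a, φ b, hφ hab, (hfφ a).trans (hf.map_prefix ha), (hfφ b).trans (hf.map_prefix hb)⟩

theorem map_lexLe (hf : LocallyStrictMono f) {x y : List α} (h : lexLe x y) :
    lexLe (f x) (f y) := by
  rcases h with h | ⟨p, a, b, hab, ha, hb⟩
  · exact Or.inl (hf.map_prefix h)
  · exact Or.inr ⟨f p, hf.map_branch hab ha hb⟩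

theorem injective (hf : LocallyStrictMono f) : Function.Injective f := by
  intro x y hxy
  wlog hle : lexLe x y generalizing x y
  · exact (this hxy.symm (lexLe_iff_le.2 (le_of_not_ge (mt lexLe_iff_le.2 hle)))).symm
  rcases hle with hpre | ⟨p, a, b, hab, ha, hb⟩
  · refine (eq_or_exists_concat_prefix hpre).resolve_right fun ⟨q, hq⟩ => ?_
    obtain ⟨φ, -, hφ⟩ := hf x
    exact not_concat_prefix_self _ _ (hxy ▸ (hφ q).trans (hf.map_prefix hq))
  · obtain ⟨c, d, hcd, hc, hd⟩ := hf.map_branch hab ha hb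
    exact absurd (eq_of_concat_prefix (hxy ▸ hc) hd) hcd.ne

theorem lexLe_iff (hf : LocallyStrictMono f) (x y : List α) : lexLe x y ↔ lexLe (f x) (f y) := by
  have hmono : Monotone f := fun x y h => lexLe_iff_le.1 (hf.map_lexLe (lexLe_iff_le.2 h))
  simp only [lexLe_iff_le, (hmono.strictMono_of_injective hf.injective).le_iff_le]

theorem map_lcp (hf : LocallyStrictMono f) (x y : List α) : f (lcp x y) = lcp (f x) (f y) := by
  wlog hle : lexLe x y generalizing x y
  · rw [lcp_comm x, lcp_comm (f x),
      this y x (lexLe_iff_le.2 (le_of_not_ge (mt lexLe_iff_le.2 hle)))]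
  rcases hle with hpre | ⟨p, a, b, hab, ha, hb⟩
  · rw [lcp_eq_left_iff.2 hpre, lcp_eq_left_iff.2 (hf.map_prefix hpre)]
  · obtain ⟨c, d, hcd, hc, hd⟩ := hf.map_branch hab ha hb
    rw [lcp_eq_of_concat_prefix ha hb hab.ne, lcp_eq_of_concat_prefix hc hd hcd.ne]

theorem prefix_iff (hf : LocallyStrictMono f) (x y : List α) : x <+: y ↔ f x <+: f y := by
  rw [← lcp_eq_left_iff, ← lcp_eq_left_iff, ← hf.map_lcp, hf.injective.eq_iff]

end LocallyStrictMono

theorem exists_strictMono_eqOn_of_finite [Countable α] [DenselyOrdered β] [NoMinOrder β]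
    [NoMaxOrder β] [Nonempty β] {g : α → β} {s : Set α} (hs : s.Finite) (hg : StrictMonoOn g s) :
    ∃ φ : α → β, StrictMono φ ∧ Set.EqOn φ g s := by
  cases nonempty_encodable α
  let graph : Order.PartialIso α β := ⟨hs.toFinset.image fun a => (a, g a), by
    simp only [Finset.forall_mem_image, Set.Finite.mem_toFinset]
    exact fun a ha b hb => (hg.cmp_map_eq ha hb).symm⟩
  let I := Order.idealOfCofinals graph (Order.PartialIso.definedAtLeft β)
  have hgraph : graph ∈ I := Order.mem_idealOfCofinals _ _
  have hcmp : ∀ f₁ ∈ I, ∀ f₂ ∈ I, ∀ u ∈ f₁.val, ∀ v ∈ f₂.val, cmp u.1 v.1 = cmp u.2 v.2 := by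
    intro f₁ hf₁ f₂ hf₂ u hu v hv
    obtain ⟨f, -, h₁, h₂⟩ := I.directed f₁ hf₁ f₂ hf₂
    exact f.prop u (h₁ hu) v (h₂ hv)
  have hdefined : ∀ a, ∃ b, ∃ f ∈ I, (a, b) ∈ f.val := by
    intro a
    obtain ⟨f, ⟨b, hb⟩, hf⟩ :=
      Order.cofinal_meets_idealOfCofinals graph (Order.PartialIso.definedAtLeft β) a
    exact ⟨b, f, hf, hb⟩
  choose φ f hf hφ using hdefined
  refine ⟨φ, fun a b hab => ?_, fun a ha => ?_⟩
  · exact (lt_iff_lt_of_cmp_eq_cmp (hcmp _ (hf a) _ (hf b) _ (hφ a) _ (hφ b))).1 hab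
  · have hmem : (a, g a) ∈ graph.val :=
      Finset.mem_image_of_mem (fun a => (a, g a)) (hs.mem_toFinset.2 ha)
    exact (eq_iff_eq_of_cmp_eq_cmp (hcmp _ (hf a) _ hgraph _ (hφ a) _ hmem)).1 rfl

theorem LocallyStrictMonoOn.exists_locallyStrictMono_eqOn [Countable α] [DenselyOrdered β]
    [NoMinOrder β] [NoMaxOrder β] [Nonempty β] {g : List α → List β} {S : Set (List α)}
    (hg : LocallyStrictMonoOn g S) (hS : ∀ x y, x <+: y → y ∈ S → x ∈ S)
    (hfin : ∀ x, {q | x ++ [q] ∈ S}.Finite) :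
    ∃ f : List α → List β, LocallyStrictMono f ∧ Set.EqOn f g S := by
  classical
  choose ψ hψ hgψ using hg
  choose φ hφ hφψ using fun x => exists_strictMono_eqOn_of_finite (hfin x) (hψ x)
  let f : List α → List β := fun x => List.reverseRecOn x (g [])
    fun x q y => if x ++ [q] ∈ S then g (x ++ [q]) else y ++ [φ x q]
  have hf_concat : ∀ x q,
      f (x ++ [q]) = if x ++ [q] ∈ S then g (x ++ [q]) else f x ++ [φ x q] :=
    fun x q => List.reverseRecOn_concat ..
  have hfg : Set.EqOn f g S := by
    intro x hx
    cases x using List.reverseRecOn with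
    | nil => exact List.reverseRecOn_nil ..
    | append_singleton x q => rw [hf_concat, if_pos hx]
  refine ⟨f, fun x => ⟨φ x, hφ x, fun q => ?_⟩, hfg⟩
  by_cases hq : x ++ [q] ∈ S
  · rw [hfg hq, hfg (hS _ _ (List.prefix_append x [q]) hq), hφψ x hq]
    exact hgψ x q hq
  · rw [hf_concat, if_neg hq]

end LocallyStrictMono

section PrefixClosure

variable {α : Type*}

/-- The set of all prefixes of elements of `T`: the words whose images are dictated by those of the
elements of `T`. -/
def prefixClosure (T : Set (List α)) : Set (List α) :=
  {x | ∃ e ∈ T, x <+: e}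

/-- `e` is the least element of `T`, for the prefix order, that extends `x`; the image of `x` is
read off from that of `e`. -/
def IsCeil (T : Set (List α)) (x e : List α) : Prop :=
  (e ∈ T ∧ x <+: e) ∧ ∀ e' ∈ T, x <+: e' → e <+: e'

/-- The least extension of `x` in `T`, with a junk value if there is none; for `⊓`-closed `T` it
exists on the prefix closure of `T`. -/
noncomputable def ceil (T : Set (List α)) (x : List α) : List α :=
  Classical.epsilon (IsCeil T x)

variable {T : Set (List α)} {x e : List α}

theorem subset_prefixClosure (T : Set (List α)) : T ⊆ prefixClosure T :=
  fun x hx => ⟨x, hx, List.prefix_rfl⟩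

theorem mem_prefixClosure_of_prefix {y : List α} (hxy : x <+: y) (hy : y ∈ prefixClosure T) :
    x ∈ prefixClosure T :=
  hy.imp fun _ he => ⟨he.1, hxy.trans he.2⟩

theorem finite_prefixClosure (hT : T.Finite) : (prefixClosure T).Finite := by
  refine (hT.biUnion fun e _ => e.inits.finite_toSet).subset ?_
  rintro x ⟨e, he, hxe⟩
  exact Set.mem_biUnion he ((List.mem_inits x e).2 hxe)

theorem IsCeil.ceil_eq (he : IsCeil T x e) : ceil T x = e := by
  have hc : IsCeil T x (ceil T x) := Classical.epsilon_spec ⟨e, he⟩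
  exact (hc.2 e he.1.1 he.1.2).eq_of_length_le (he.2 _ hc.1.1 hc.1.2).length_le

theorem ceil_of_mem (hx : x ∈ T) : ceil T x = x :=
  IsCeil.ceil_eq ⟨⟨hx, List.prefix_rfl⟩, fun _ _ h => h⟩

theorem IsCeil.concat {q : α} (he : IsCeil T x e) (hx : x ∉ T) (hq : x ++ [q] ∈ prefixClosure T) :
    IsCeil T (x ++ [q]) e := by
  obtain ⟨e', he', hqe'⟩ := hq
  have hee' : e <+: e' := he.2 e' he' ((List.prefix_append x [q]).trans hqe')
  have hne : x ≠ e := fun h => hx (h ▸ he.1.1)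
  obtain ⟨r, hr⟩ := (eq_or_exists_concat_prefix he.1.2).resolve_left hne
  obtain rfl : r = q := eq_of_concat_prefix (hr.trans hee') hqe'
  exact ⟨⟨he.1.1, hr⟩, fun u hu hxu => he.2 u hu ((List.prefix_append x [r]).trans hxu)⟩

theorem LcpClosed.isCeil_ceil [DecidableEq α] (hT : LcpClosed T) (hx : x ∈ prefixClosure T) :
    IsCeil T x (ceil T x) := by
  let e := Function.argminOn List.length {e ∈ T | x <+: e} hx
  have he : e ∈ T ∧ x <+: e := Function.argminOn_mem List.length {e ∈ T | x <+: e} hx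
  refine Classical.epsilon_spec ⟨e, he, fun e' he' hxe' => lcp_eq_left_iff.1 ?_⟩
  refine (lcp_prefix_left e e').eq_of_length_le ?_
  exact Function.argminOn_le List.length {e ∈ T | x <+: e}
    ⟨hT e he.1 e' he', prefix_lcp_iff.2 ⟨he.2, hxe'⟩⟩

end PrefixClosure

section Stretching

variable {α β : Type*}

/-- On `T`, the map `h` preserves `⊓` and the lexicographic order and does not shorten distances
along branches: the part of `w ≼* w'` from which the extension is built. -/
structure StretchesOn [LinearOrder α] [LinearOrder β] (h : List α → List β)
    (T : Set (List α)) : Prop where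
  map_lcp : ∀ x ∈ T, ∀ y ∈ T, h (lcp x y) = lcp (h x) (h y)
  map_lexLe : ∀ x ∈ T, ∀ y ∈ T, lexLe x y → lexLe (h x) (h y)
  length_add_le : ∀ d ∈ T, ∀ e ∈ T, d <+: e →
    e.length + (h d).length ≤ (h e).length + d.length

/-- The extension of `h` from `T` to its prefix closure: from the image of the least `e ∈ T` above
`x`, as many letters are dropped as separate `x` from `e`. Counting from the top puts all letters
inserted by `h` between `d` and `e` directly above `h d`. -/
noncomputable def closureExtension (T : Set (List α)) (h : List α → List β) (x : List α) :
    List β :=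
  (h (ceil T x)).rdrop ((ceil T x).length - x.length)

variable {T : Set (List α)} {h : List α → List β} {x : List α}

theorem closureExtension_of_mem (hx : x ∈ T) : closureExtension T h x = h x := by
  simp [closureExtension, ceil_of_mem hx]

theorem closureExtension_prefix (T : Set (List α)) (h : List α → List β) (x : List α) :
    closureExtension T h x <+: h (ceil T x) :=
  List.take_prefix _ _

theorem length_closureExtension (T : Set (List α)) (h : List α → List β) (x : List α) :
    (closureExtension T h x).length =
      (h (ceil T x)).length - ((ceil T x).length - x.length) := by
  simp [closureExtension, List.rdrop]

variable [LinearOrder α] [LinearOrder β]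

namespace StretchesOn

theorem map_prefix (hh : StretchesOn h T) {y : List α} (hx : x ∈ T) (hy : y ∈ T) (hxy : x <+: y) :
    h x <+: h y := by
  rw [← lcp_eq_left_iff, ← hh.map_lcp x hx y hy, lcp_eq_left_iff.2 hxy]

theorem exists_concat_closureExtension_prefix (hh : StretchesOn h T) (hT : LcpClosed T)
    (hnil : [] ∈ T) {q : α} (hq : x ++ [q] ∈ prefixClosure T) :
    ∃ c, closureExtension T h x ++ [c] <+: closureExtension T h (x ++ [q]) := by
  have hce := hT.isCeil_ceil hq
  have hce' := closureExtension_prefix T h (x ++ [q])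
  have hlen' := length_closureExtension T h (x ++ [q])
  set e := ceil T (x ++ [q])
  have hqe : x.length + 1 ≤ e.length := by simpa using hce.1.2.length_le
  have hxe : x <+: e := (List.prefix_append x [q]).trans hce.1.2
  rw [List.length_append, List.length_singleton] at hlen'
  suffices closureExtension T h x <+: h e ∧
      (closureExtension T h x).length < (closureExtension T h (x ++ [q])).length from
    exists_concat_prefix (List.prefix_of_prefix_length_le this.1 hce' this.2.le) this.2
  by_cases hx : x ∈ T
  · rw [closureExtension_of_mem hx]
    have hstretch := hh.length_add_le x hx e hce.1.1 hxe
    exact ⟨hh.map_prefix hx hce.1.1 hxe, by omega⟩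
  · have hcx : ceil T x = e := by
      have hcx := hT.isCeil_ceil (mem_prefixClosure_of_prefix (List.prefix_append x [q]) hq)
      exact (hcx.concat hx hq).ceil_eq.symm
    have hlen := length_closureExtension T h x
    -- `|e| ≤ |h e|`, so the subtractions of lengths are not truncated
    have hstretch := hh.length_add_le [] hnil e hce.1.1 List.nil_prefix
    rw [hcx] at hlen
    rw [List.length_nil] at hstretch
    exact ⟨hcx ▸ closureExtension_prefix T h x, by omega⟩

theorem lt_of_concat_closureExtension_prefix (hh : StretchesOn h T) (hT : LcpClosed T) {a b : α}
    {c d : β} (hab : a < b) (ha : x ++ [a] ∈ prefixClosure T) (hb : x ++ [b] ∈ prefixClosure T)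
    (hc : closureExtension T h x ++ [c] <+: closureExtension T h (x ++ [a]))
    (hd : closureExtension T h x ++ [d] <+: closureExtension T h (x ++ [b])) : c < d := by
  obtain ⟨⟨heT, hae⟩, -⟩ := hT.isCeil_ceil ha
  obtain ⟨⟨heT', hbe'⟩, -⟩ := hT.isCeil_ceil hb
  replace hc := hc.trans (closureExtension_prefix T h _)
  replace hd := hd.trans (closureExtension_prefix T h _)
  set e := ceil T (x ++ [a])
  set e' := ceil T (x ++ [b])
  have hlcp : lcp e e' = x := lcp_eq_of_concat_prefix hae hbe' hab.ne
  have hx : x ∈ T := hlcp ▸ hT e heT e' heT'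
  rw [closureExtension_of_mem hx] at hc hd
  have hlex : lexLe (h e) (h e') :=
    hh.map_lexLe e heT e' heT' (Or.inr ⟨x, a, b, hab, hae, hbe'⟩)
  refine (le_of_lexLe_of_concat_prefix hlex hc hd).lt_of_ne ?_
  rintro rfl
  have hcx : h x ++ [c] <+: lcp (h e) (h e') := prefix_lcp_iff.2 ⟨hc, hd⟩
  rw [← hh.map_lcp e heT e' heT', hlcp] at hcx
  exact not_concat_prefix_self _ _ hcx

theorem locallyStrictMonoOn_closureExtension [Nonempty β] (hh : StretchesOn h T)
    (hT : LcpClosed T) (hnil : [] ∈ T) :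
    LocallyStrictMonoOn (closureExtension T h) (prefixClosure T) := by
  intro x
  choose! φ hφ using fun q => hh.exists_concat_closureExtension_prefix (x := x) (q := q) hT hnil
  exact ⟨φ, fun a ha b hb hab =>
    hh.lt_of_concat_closureExtension_prefix hT hab ha hb (hφ a ha) (hφ b hb), hφ⟩

end StretchesOn

theorem stmt12_general [Countable α] [DenselyOrdered β] [NoMinOrder β] [NoMaxOrder β] [Nonempty β]
    (hfin : T.Finite) (hnil : [] ∈ T) (hT : LcpClosed T) (hh : StretchesOn h T) :
    ∃ f : List α → List β,
      (∀ x ∈ T, f x = h x) ∧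
      Function.Injective f ∧
      (∀ x y : List α, x <+: y ↔ f x <+: f y) ∧
      (∀ x y : List α, lexLe x y ↔ lexLe (f x) (f y)) ∧
      (∀ x y : List α, f (lcp x y) = lcp (f x) (f y)) := by
  have hbranch : ∀ x, {q | x ++ [q] ∈ prefixClosure T}.Finite := fun x =>
    (finite_prefixClosure hfin).preimage (fun a _ b _ hab => by simpa using hab)
  obtain ⟨f, hf, hfext⟩ :=
    (hh.locallyStrictMonoOn_closureExtension hT hnil).exists_locallyStrictMono_eqOn
      (fun _ _ => mem_prefixClosure_of_prefix) hbranch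
  have hfh : ∀ x ∈ T, f x = h x := fun x hx =>
    (hfext (subset_prefixClosure T hx)).trans (closureExtension_of_mem hx)
  exact ⟨f, hfh, hf.injective, hf.prefix_iff, hf.lexLe_iff, hf.map_lcp⟩

end Stretching

section MCAT

theorem prefix_listLCP_iff {z : Word} {l : List Word} (hl : l ≠ []) :
    z <+: listLCP l ↔ ∀ x ∈ l, z <+: x := by
  fun_induction listLCP l with
  | case1 => exact absurd rfl hl
  | case2 x => simp
  | case3 x l hne ih => rw [prefix_lcp_iff, ih (by simpa using hne), List.forall_mem_cons]

variable (C : List Word) {k : ℕ} (w : Fin k → Word)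

theorem finite_MCAT : (MCAT C w).Finite := by
  refine ((Set.finite_range fun I : Finset (Fin (k + C.length)) =>
    listLCP (I.toList.map (Fin.append w C.get))).subset ?_).insert []
  rintro _ ⟨I, -, rfl⟩
  exact ⟨I, rfl⟩

theorem nil_mem_MCAT : [] ∈ MCAT C w :=
  Set.mem_insert _ _

theorem lcpClosed_MCAT : LcpClosed (MCAT C w) := by
  have prefix_iff : ∀ {I : Finset (Fin (k + C.length))} {z : Word}, I.Nonempty →
      (z <+: listLCP (I.toList.map (Fin.append w C.get)) ↔
        ∀ i ∈ I, z <+: Fin.append w C.get i) := fun hI => by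
    rw [prefix_listLCP_iff (by simpa using hI.ne_empty)]
    simp only [List.forall_mem_map, Finset.mem_toList]
  rintro _ (rfl | ⟨I, hI, rfl⟩) y hy
  · rw [lcp_eq_left_iff.2 List.nil_prefix]
    exact nil_mem_MCAT C w
  rcases hy with rfl | ⟨J, hJ, rfl⟩
  · rw [lcp_comm, lcp_eq_left_iff.2 List.nil_prefix]
    exact nil_mem_MCAT C w
  have hIJ : (I ∪ J).Nonempty := hI.mono Finset.subset_union_left
  refine Or.inr ⟨I ∪ J, hIJ, (eq_lcp_of_forall_prefix_iff fun z => ?_).symm⟩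
  simp only [prefix_iff hI, prefix_iff hJ, prefix_iff hIJ, Finset.forall_mem_union]

variable {C w}

theorem IsInducedIso.stretchesOn {w' : Fin k → Word} {h : Word → Word}
    (hiso : IsInducedIso C w w' h) (hstr : StretchCond C w h) : StretchesOn h (MCAT C w) := by
  obtain ⟨hbij, hord, -, -⟩ := hiso
  have himage : LcpClosed (h '' MCAT C w) := hbij.image_eq.symm ▸ lcpClosed_MCAT C w'
  refine ⟨fun x hx y hy => ?_, fun x hx y hy => (hord x hx y hy).2.1, fun d hd e he hde => ?_⟩
  · exact (lcpClosed_MCAT C w).map_lcp_of_prefix_iff himage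
      (fun x hx y hy => (hord x hx y hy).1) hx hy
  · rcases eq_or_ne d e with rfl | hne
    · omega
    · exact hstr d hd e he hde hne

end MCAT

/-- If `w ≼* w'`, then the induced isomorphism extends to an injection of all of `List ℚ`
preserving the prefix order, the lexicographic order (in both directions), and longest
common prefixes. -/
theorem stmt12 (C : List Word) (hC : ∀ c ∈ C, ∀ c' : Word, c' <+: c → c' ∈ C)
    {k : ℕ} (w w' : Fin k → Word) (h : Word → Word)
    (hiso : IsInducedIso C w w' h) (hstr : StretchCond C w h) :
    ∃ f : Word → Word,
      (∀ x ∈ MCAT C w, f x = h x) ∧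
      Function.Injective f ∧
      (∀ x y : Word, x <+: y ↔ f x <+: f y) ∧
      (∀ x y : Word, lexLe x y ↔ lexLe (f x) (f y)) ∧
      (∀ x y : Word, f (lcp x y) = lcp (f x) (f y)) := by
  exact stmt12_general (finite_MCAT C w) (nil_mem_MCAT C w) (lcpClosed_MCAT C w)
    (hiso.stretchesOn hstr)

end CLTL
end
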